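/- arXiv:1707.09563 — 5 statements merged into one kernel-verified Lean document; each statement's English description precedes it below -/
import Mathlib

section
/- Let U be a real random variable with law μ_U and continuous cdf F_U, and let X be a {0,1}-valued random variable on the same probability space with p_x = P(X = x) and p_1 ∈ (0,1). Suppose X is c-dependent with U for some c ∈ [0,1]. Then for each x ∈ {0,1} and every u ∈ ℝ, P(U ≤ u | X = x) ≤ min{ F_U(u) + (c/p_x)·min{F_U(u), 1 − F_U(u)}, F_U(u)/p_x, 1 }. -/
open MeasureTheory Set

noncomputable section

/-- `X` is `c`-dependent with the real random variable `V`: there is a measurable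
version `g` of `v ↦ P(X = 1 ∣ V = v)` taking values in `[0,1]` such that
`|g(v) - P(X = 1)| ≤ c` for `μ_V`-almost every `v`. -/
def CDep {Ω : Type*} [MeasurableSpace Ω] (P : Measure Ω) (X : Ω → ℕ) (V : Ω → ℝ)
    (c : ℝ) : Prop :=
  ∃ g : ℝ → ℝ, Measurable g ∧ (∀ v, 0 ≤ g v ∧ g v ≤ 1) ∧
    (∀ A : Set ℝ, MeasurableSet A →
      (P ({ω | X ω = 1} ∩ V ⁻¹' A)).toReal = ∫ v in A, g v ∂(Measure.map V P)) ∧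
    (∀ᵐ v ∂(Measure.map V P), |g v - (P {ω | X ω = 1}).toReal| ≤ c)

/-!
The deviation from independence `P(S ∩ T) - P(S) P(T)` of two events changes sign when either of
them is replaced by its complement. Averaging `|g - p₁| ≤ c` over `{V ∈ A}` and over its complement
therefore bounds the deviation of `{X = 1}` and `{V ∈ A}` by `c` times the smaller of
`P(V ∈ A)` and `P(V ∉ A)`, and the same bound holds for `{X = 0}`. Dividing by `p_x` gives the first
term of the minimum; the other two are monotonicity of `P`.
-/

lemma norm_setIntegral_sub_measureReal_smul_le {α E : Type*} [MeasurableSpace α]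
    [NormedAddCommGroup E] [NormedSpace ℝ E] [CompleteSpace E] {μ : Measure α} {s : Set α}
    {f : α → E} {a : E} {C : ℝ} (hs : μ s ≠ ⊤) (hf : IntegrableOn f s μ)
    (hfa : ∀ᵐ x ∂μ.restrict s, ‖f x - a‖ ≤ C) :
    ‖(∫ x in s, f x ∂μ) - μ.real s • a‖ ≤ C * μ.real s := by
  rw [← setIntegral_const, ← integral_sub hf (integrableOn_const hs)]
  exact norm_setIntegral_le_of_norm_le_const_ae hs.lt_top hfa

section Events

variable {Ω : Type*} [MeasurableSpace Ω] {P : Measure Ω} {S T : Set Ω}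

lemma measureReal_compl_inter_sub_mul [IsProbabilityMeasure P] (hS : MeasurableSet S) :
    P.real (Sᶜ ∩ T) - P.real Sᶜ * P.real T = -(P.real (S ∩ T) - P.real S * P.real T) := by
  have hsplit : P.real (T ∩ S) + P.real (T \ S) = P.real T := measureReal_inter_add_sdiff hS
  rw [inter_comm Sᶜ, ← sdiff_eq, inter_comm S, probReal_compl_eq_one_sub hS]
  linear_combination hsplit

lemma abs_measureReal_compl_inter_sub_mul [IsProbabilityMeasure P] (hS : MeasurableSet S) :
    |P.real (Sᶜ ∩ T) - P.real Sᶜ * P.real T| = |P.real (S ∩ T) - P.real S * P.real T| := by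
  rw [measureReal_compl_inter_sub_mul hS, abs_neg]

lemma abs_measureReal_inter_compl_sub_mul [IsProbabilityMeasure P] (hT : MeasurableSet T) :
    |P.real (S ∩ Tᶜ) - P.real S * P.real Tᶜ| = |P.real (S ∩ T) - P.real S * P.real T| := by
  simpa only [inter_comm, mul_comm] using abs_measureReal_compl_inter_sub_mul (T := S) hT

lemma measureReal_inter_div_le_min [IsFiniteMeasure P] {ε : ℝ} (hS : 0 < P.real S)
    (hST : P.real (S ∩ T) - P.real S * P.real T ≤ ε) :
    P.real (S ∩ T) / P.real S ≤
      min (min (P.real T + ε / P.real S) (P.real T / P.real S)) 1 := by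
  refine le_min (le_min ?_ ?_) ?_
  · rw [div_le_iff₀ hS, add_mul, div_mul_cancel₀ _ hS.ne']
    linarith
  · exact div_le_div_of_nonneg_right (measureReal_mono inter_subset_right) hS.le
  · exact div_le_one_of_le₀ (measureReal_mono inter_subset_left) hS.le

end Events

lemma setOf_eq_zero_eq_compl_setOf_eq_one {Ω : Type*} {X : Ω → ℕ} (hX01 : ∀ ω, X ω ≤ 1) :
    {ω | X ω = 0} = {ω | X ω = 1}ᶜ := by
  ext ω
  have := hX01 ω
  change X ω = 0 ↔ ¬X ω = 1
  omega

section ConditionalDependence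

variable {Ω : Type*} [MeasurableSpace Ω] {P : Measure Ω} {X : Ω → ℕ} {V : Ω → ℝ} {c : ℝ}
  {A : Set ℝ} {x : ℕ}

lemma measureReal_setOf_eq_pos [IsProbabilityMeasure P] (hX : Measurable X)
    (hX01 : ∀ ω, X ω ≤ 1) (hp1 : P.real {ω | X ω = 1} ∈ Ioo 0 1) (hx : x ≤ 1) :
    0 < P.real {ω | X ω = x} := by
  have hX1 : MeasurableSet {ω | X ω = 1} := hX (measurableSet_singleton 1)
  interval_cases x
  · rw [setOf_eq_zero_eq_compl_setOf_eq_one hX01, probReal_compl_eq_one_sub hX1]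
    exact sub_pos.mpr hp1.2
  · exact hp1.1

namespace CDep

lemma abs_measureReal_one_inter_sub_mul_le [IsFiniteMeasure P] (hdep : CDep P X V c)
    (hV : Measurable V) (hA : MeasurableSet A) :
    |P.real ({ω | X ω = 1} ∩ V ⁻¹' A) - P.real {ω | X ω = 1} * P.real (V ⁻¹' A)|
      ≤ c * P.real (V ⁻¹' A) := by
  obtain ⟨g, hg, hg01, hgA, hgc⟩ := hdep
  have hint : Integrable g (P.map V) :=
    .of_mem_Icc 0 1 hg.aemeasurable (.of_forall hg01)
  have hXA : P.real ({ω | X ω = 1} ∩ V ⁻¹' A) = ∫ v in A, g v ∂(P.map V) := hgA A hA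
  rw [hXA, ← map_measureReal_apply hV hA, mul_comm (P.real _)]
  exact norm_setIntegral_sub_measureReal_smul_le (measure_ne_top _ _) hint.integrableOn
    (ae_restrict_of_ae hgc)

lemma abs_measureReal_one_inter_sub_mul_le_min [IsProbabilityMeasure P] (hdep : CDep P X V c)
    (hV : Measurable V) (hA : MeasurableSet A) :
    |P.real ({ω | X ω = 1} ∩ V ⁻¹' A) - P.real {ω | X ω = 1} * P.real (V ⁻¹' A)|
      ≤ c * min (P.real (V ⁻¹' A)) (1 - P.real (V ⁻¹' A)) := by
  rcases min_choice (P.real (V ⁻¹' A)) (1 - P.real (V ⁻¹' A)) with hmin | hmin <;> rw [hmin]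
  · exact hdep.abs_measureReal_one_inter_sub_mul_le hV hA
  · rw [← abs_measureReal_inter_compl_sub_mul (hV hA), ← probReal_compl_eq_one_sub (hV hA),
      ← preimage_compl]
    exact hdep.abs_measureReal_one_inter_sub_mul_le hV hA.compl

lemma abs_measureReal_inter_sub_mul_le_min [IsProbabilityMeasure P] (hdep : CDep P X V c)
    (hV : Measurable V) (hX : Measurable X) (hX01 : ∀ ω, X ω ≤ 1) (hx : x ≤ 1)
    (hA : MeasurableSet A) :
    |P.real ({ω | X ω = x} ∩ V ⁻¹' A) - P.real {ω | X ω = x} * P.real (V ⁻¹' A)|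
      ≤ c * min (P.real (V ⁻¹' A)) (1 - P.real (V ⁻¹' A)) := by
  have hone := hdep.abs_measureReal_one_inter_sub_mul_le_min hV hA
  have hX1 : MeasurableSet {ω | X ω = 1} := hX (measurableSet_singleton 1)
  interval_cases x
  · rwa [setOf_eq_zero_eq_compl_setOf_eq_one hX01, abs_measureReal_compl_inter_sub_mul hX1]
  · exact hone

end CDep

theorem cdf_upper_bound_c_dep_general [IsProbabilityMeasure P] (hV : Measurable V)
    (hX : Measurable X) (hX01 : ∀ ω, X ω ≤ 1) (hp1 : P.real {ω | X ω = 1} ∈ Ioo 0 1)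
    (hdep : CDep P X V c) (hx : x ≤ 1) (hA : MeasurableSet A) :
    P.real (V ⁻¹' A ∩ {ω | X ω = x}) / P.real {ω | X ω = x} ≤
      min (min
          (P.real (V ⁻¹' A)
            + c / P.real {ω | X ω = x} * min (P.real (V ⁻¹' A)) (1 - P.real (V ⁻¹' A)))
          (P.real (V ⁻¹' A) / P.real {ω | X ω = x}))
        1 := by
  rw [inter_comm, div_mul_eq_mul_div]
  exact measureReal_inter_div_le_min (measureReal_setOf_eq_pos hX hX01 hp1 hx)
    (le_of_abs_le (hdep.abs_measureReal_inter_sub_mul_le_min hV hX hX01 hx hA))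

end ConditionalDependence

/-- Theorem 1 (upper cdf bound): under `c`-dependence, for each `x ∈ {0,1}` and all `u`,
`P(U ≤ u ∣ X = x) ≤ min { F_U(u) + (c/p_x) min{F_U(u), 1-F_U(u)}, F_U(u)/p_x, 1 }`. -/
theorem cdf_upper_bound_c_dep {Ω : Type*} [MeasurableSpace Ω]
    (P : Measure Ω) [IsProbabilityMeasure P]
    (U : Ω → ℝ) (X : Ω → ℕ) (hU : Measurable U) (hX : Measurable X)
    (hX01 : ∀ ω, X ω ≤ 1)
    (hFcont : Continuous fun u : ℝ => (P {ω | U ω ≤ u}).toReal)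
    (hp1 : (P {ω | X ω = 1}).toReal ∈ Set.Ioo (0:ℝ) 1)
    (c : ℝ) (hc : c ∈ Set.Icc (0:ℝ) 1)
    (hdep : CDep P X U c) :
    ∀ x : ℕ, x ≤ 1 → ∀ u : ℝ,
      (P ({ω | U ω ≤ u} ∩ {ω | X ω = x})).toReal / (P {ω | X ω = x}).toReal ≤
        min (min
            ((P {ω | U ω ≤ u}).toReal
              + c / (P {ω | X ω = x}).toReal
                * min (P {ω | U ω ≤ u}).toReal (1 - (P {ω | U ω ≤ u}).toReal))
            ((P {ω | U ω ≤ u}).toReal / (P {ω | X ω = x}).toReal))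
          1 := by
  intro x hx u
  exact cdf_upper_bound_c_dep_general hU hX hX01 hp1 hdep hx measurableSet_Iic
end
end

section
/- Let F_U : ℝ → [0,1] be a continuous nondecreasing function with limit 0 at −∞ and limit 1 at +∞ (a continuous cdf), let p ∈ (0,1) and c ∈ [0,1]. Then the functions F̄(u) = min{ F_U(u) + (c/p)·min{F_U(u), 1 − F_U(u)}, F_U(u)/p, 1 } and F̲(u) = max{ F_U(u) − (c/p)·min{F_U(u), 1 − F_U(u)}, (F_U(u) − 1)/p + 1, 0 } are both nondecreasing and continuous on ℝ, with limit 0 at −∞ and limit 1 at +∞; in particular, this monotonicity holds even when c > p, in which case F̄(u) = min{(1 + c/p)F_U(u), F_U(u)/p, 1} and F̲(u) = max{(1 + c/p)F_U(u) − c/p, (F_U(u) − 1)/p + 1, 0} for all u. -/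
open MeasureTheory Set Filter

noncomputable section

/-- Upper `c`-dependence cdf bound function. -/
def Fupper (F : ℝ → ℝ) (p c : ℝ) (u : ℝ) : ℝ :=
  min (min (F u + c / p * min (F u) (1 - F u)) (F u / p)) 1

/-- Lower `c`-dependence cdf bound function. -/
def Flower (F : ℝ → ℝ) (p c : ℝ) (u : ℝ) : ℝ :=
  max (max (F u - c / p * min (F u) (1 - F u)) ((F u - 1) / p + 1)) 0

/-!
Both bound functions have the form `g ∘ F`, with `g` a continuous distortion of the unit interval,
and the distortion giving `F̲` is the reflection `x ↦ 1 - g (1 - x)` of the one giving `F̄`.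
Only the monotonicity of `g` needs an argument. Write `k = c / p`. If `|k| ≤ 1`, the term
`k * min x (1 - x)` is `1`-Lipschitz, so `x` outgrows it. If `1 ≤ k`, then on `1 - x ≤ x ≤ 1` both
`x + k * (1 - x)` and `(1 + k) * x` are at least `1`, so truncation at `1` replaces the first, which
may decrease, by the second, which increases.
-/

/-- A distortion function: a continuous nondecreasing map of `[0, 1]` fixing both endpoints, so that
its composition with a continuous cdf is again a continuous cdf. Values outside `[0, 1]` are
unconstrained. -/
structure IsDistortion (g : ℝ → ℝ) : Prop where
  monotoneOn : MonotoneOn g (Icc 0 1)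
  continuousOn : ContinuousOn g (Icc 0 1)
  map_zero : g 0 = 0
  map_one : g 1 = 1

namespace IsDistortion

variable {g : ℝ → ℝ}

lemma dual (hg : IsDistortion g) : IsDistortion fun x => 1 - g (1 - x) where
  monotoneOn x hx y hy hxy :=
    sub_le_sub_left (hg.monotoneOn (Icc.one_sub_mem hy) (Icc.one_sub_mem hx)
      (sub_le_sub_left hxy 1)) 1
  continuousOn := continuousOn_const.sub <|
    hg.continuousOn.comp (by fun_prop) fun _ hx => Icc.one_sub_mem hx
  map_zero := by rw [sub_zero, hg.map_one, sub_self]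
  map_one := by rw [sub_self, hg.map_zero, sub_zero]

lemma tendsto_comp {ι : Type*} {l : Filter ι} {F : ι → ℝ} {a : ℝ} (hg : IsDistortion g)
    (ha : a ∈ Icc (0 : ℝ) 1) (h01 : ∀ i, F i ∈ Icc (0 : ℝ) 1) (hF : Tendsto F l (nhds a)) :
    Tendsto (g ∘ F) l (nhds (g a)) :=
  (hg.continuousOn a ha).tendsto.comp <| tendsto_nhdsWithin_iff.2 ⟨hF, .of_forall h01⟩

lemma comp_cdf {α : Type*} [TopologicalSpace α] [Preorder α] {F : α → ℝ} (hg : IsDistortion g)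
    (hmono : Monotone F) (hcont : Continuous F) (h01 : ∀ u, F u ∈ Icc (0 : ℝ) 1)
    (hbot : Tendsto F atBot (nhds 0)) (htop : Tendsto F atTop (nhds 1)) :
    Monotone (g ∘ F) ∧ Continuous (g ∘ F) ∧
      Tendsto (g ∘ F) atBot (nhds 0) ∧ Tendsto (g ∘ F) atTop (nhds 1) := by
  refine ⟨fun u v huv => hg.monotoneOn (h01 u) (h01 v) (hmono huv),
    hg.continuousOn.comp_continuous hcont h01, ?_, ?_⟩
  · simpa only [hg.map_zero] using hg.tendsto_comp unitInterval.zero_mem h01 hbot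
  · simpa only [hg.map_one] using hg.tendsto_comp unitInterval.one_mem h01 htop

end IsDistortion

/-- The function `g` with `F̄ = g ∘ F`, where `k` stands for `c / p`. -/
def upperDistortion (p k x : ℝ) : ℝ :=
  min (min (x + k * min x (1 - x)) (x / p)) 1

/-- The function `g` with `F̲ = g ∘ F`, where `k` stands for `c / p`. -/
def lowerDistortion (p k x : ℝ) : ℝ :=
  max (max (x - k * min x (1 - x)) ((x - 1) / p + 1)) 0

variable {p k x : ℝ}

lemma one_sub_min_min_one (a b : ℝ) : 1 - min (min a b) 1 = max (max (1 - a) (1 - b)) 0 := by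
  rw [← max_sub_sub_left, ← max_sub_sub_left, sub_self]

lemma lowerDistortion_eq_one_sub (p k x : ℝ) :
    lowerDistortion p k x = 1 - upperDistortion p k (1 - x) := by
  rw [lowerDistortion, upperDistortion, one_sub_min_min_one, sub_sub_cancel, min_comm (1 - x)]
  ring_nf

lemma upperDistortion_of_one_le (hk : 1 ≤ k) (hx : x ≤ 1) :
    upperDistortion p k x = min (min ((1 + k) * x) (x / p)) 1 := by
  rw [upperDistortion]
  rcases le_total x (1 - x) with h | h
  · rw [min_eq_left h, one_add_mul]
  · have hfalling : 1 ≤ x + k * (1 - x) := by nlinarith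
    have hrising : 1 ≤ (1 + k) * x := by nlinarith
    rw [min_eq_right h, min_right_comm, min_eq_right hfalling, min_right_comm, min_eq_right hrising]

lemma lowerDistortion_of_one_le (hk : 1 ≤ k) (hx : 0 ≤ x) :
    lowerDistortion p k x = max (max ((1 + k) * x - k) ((x - 1) / p + 1)) 0 := by
  rw [lowerDistortion_eq_one_sub, upperDistortion_of_one_le hk (sub_le_self 1 hx),
    one_sub_min_min_one]
  ring_nf

lemma monotone_add_mul_of_lipschitzWith_one {f : ℝ → ℝ} (hf : LipschitzWith 1 f) (hk : |k| ≤ 1) :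
    Monotone fun x => x + k * f x := by
  intro x y hxy
  have hf_sub : |f x - f y| ≤ |x - y| := by
    simpa only [NNReal.coe_one, one_mul, Real.dist_eq] using hf.dist_le_mul x y
  have hdiff : k * (f x - f y) ≤ y - x :=
    calc k * (f x - f y) ≤ |k| * |f x - f y| := (le_abs_self _).trans_eq (abs_mul _ _)
      _ ≤ 1 * |x - y| := mul_le_mul hk hf_sub (abs_nonneg _) zero_le_one
      _ = y - x := by rw [one_mul, abs_sub_comm, abs_of_nonneg (sub_nonneg.2 hxy)]
  linarith

lemma lipschitzWith_one_min_one_sub : LipschitzWith 1 fun x : ℝ => min x (1 - x) := by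
  have hsub : LipschitzWith 1 fun x : ℝ => 1 - x :=
    (IsometryEquiv.subLeft (1 : ℝ)).isometry.lipschitz
  simpa only [max_self, id] using LipschitzWith.id.min hsub

lemma monotoneOn_upperDistortion (hp : 0 ≤ p) (hk : -1 ≤ k) :
    MonotoneOn (upperDistortion p k) (Iic 1) := by
  intro x hx y hy hxy
  rcases le_total k 1 with hk1 | hk1
  · have hadd := monotone_add_mul_of_lipschitzWith_one lipschitzWith_one_min_one_sub
      (abs_le.2 ⟨hk, hk1⟩) hxy
    exact min_le_min_right 1 (min_le_min hadd (div_le_div_of_nonneg_right hxy hp))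
  · rw [upperDistortion_of_one_le hk1 hx, upperDistortion_of_one_le hk1 hy]
    gcongr

lemma continuous_upperDistortion (p k : ℝ) : Continuous (upperDistortion p k) := by
  unfold upperDistortion
  fun_prop

lemma upperDistortion_zero (p k : ℝ) : upperDistortion p k 0 = 0 := by
  simp [upperDistortion]

lemma upperDistortion_one (hp : 0 < p) (hp1 : p ≤ 1) (k : ℝ) : upperDistortion p k 1 = 1 := by
  simp [upperDistortion, (one_le_inv₀ hp).2 hp1]

lemma isDistortion_upperDistortion (hp : 0 < p) (hp1 : p ≤ 1) (hk : -1 ≤ k) :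
    IsDistortion (upperDistortion p k) where
  monotoneOn := (monotoneOn_upperDistortion hp.le hk).mono Icc_subset_Iic_self
  continuousOn := (continuous_upperDistortion p k).continuousOn
  map_zero := upperDistortion_zero p k
  map_one := upperDistortion_one hp hp1 k

lemma isDistortion_lowerDistortion (hp : 0 < p) (hp1 : p ≤ 1) (hk : -1 ≤ k) :
    IsDistortion (lowerDistortion p k) := by
  rw [funext (lowerDistortion_eq_one_sub p k)]
  exact (isDistortion_upperDistortion hp hp1 hk).dual

theorem bound_functions_are_cdfs_general {α : Type*} [TopologicalSpace α] [Preorder α] {F : α → ℝ}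
    (hmono : Monotone F) (hcont : Continuous F) (h01 : ∀ u, F u ∈ Icc (0 : ℝ) 1)
    (hbot : Tendsto F atBot (nhds 0)) (htop : Tendsto F atTop (nhds 1))
    (hp : 0 < p) (hp1 : p ≤ 1) (hk : -1 ≤ k) :
    (Monotone (upperDistortion p k ∘ F) ∧ Continuous (upperDistortion p k ∘ F) ∧
      Tendsto (upperDistortion p k ∘ F) atBot (nhds 0) ∧
      Tendsto (upperDistortion p k ∘ F) atTop (nhds 1)) ∧
    (Monotone (lowerDistortion p k ∘ F) ∧ Continuous (lowerDistortion p k ∘ F) ∧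
      Tendsto (lowerDistortion p k ∘ F) atBot (nhds 0) ∧
      Tendsto (lowerDistortion p k ∘ F) atTop (nhds 1)) ∧
    (1 ≤ k → ∀ u,
      upperDistortion p k (F u) = min (min ((1 + k) * F u) (F u / p)) 1 ∧
      lowerDistortion p k (F u) = max (max ((1 + k) * F u - k) ((F u - 1) / p + 1)) 0) :=
  ⟨(isDistortion_upperDistortion hp hp1 hk).comp_cdf hmono hcont h01 hbot htop,
    (isDistortion_lowerDistortion hp hp1 hk).comp_cdf hmono hcont h01 hbot htop,
    fun hk1 u =>
      ⟨upperDistortion_of_one_le hk1 (h01 u).2, lowerDistortion_of_one_le hk1 (h01 u).1⟩⟩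

/-- The bound functions `F̄` and `F̲` are nondecreasing continuous cdfs (limits `0` at `-∞`
and `1` at `+∞`); in particular this holds even when `c > p`, in which case they take the
simplified forms given below. -/
theorem bound_functions_are_cdfs (F : ℝ → ℝ)
    (hmono : Monotone F) (hcont : Continuous F)
    (h01 : ∀ u, F u ∈ Set.Icc (0:ℝ) 1)
    (hbot : Tendsto F atBot (nhds 0)) (htop : Tendsto F atTop (nhds 1))
    (p : ℝ) (hp : p ∈ Set.Ioo (0:ℝ) 1) (c : ℝ) (hc : c ∈ Set.Icc (0:ℝ) 1) :
    (Monotone (Fupper F p c) ∧ Continuous (Fupper F p c) ∧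
      Tendsto (Fupper F p c) atBot (nhds 0) ∧ Tendsto (Fupper F p c) atTop (nhds 1)) ∧
    (Monotone (Flower F p c) ∧ Continuous (Flower F p c) ∧
      Tendsto (Flower F p c) atBot (nhds 0) ∧ Tendsto (Flower F p c) atTop (nhds 1)) ∧
    (p < c → ∀ u,
      Fupper F p c u = min (min ((1 + c / p) * F u) (F u / p)) 1 ∧
      Flower F p c u = max (max ((1 + c / p) * F u - c / p) ((F u - 1) / p + 1)) 0) := by
  have hk : -1 ≤ c / p := neg_one_lt_zero.le.trans (div_nonneg hc.1 hp.1.le)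
  obtain ⟨hupper, hlower, hform⟩ :=
    bound_functions_are_cdfs_general hmono hcont h01 hbot htop hp.1 hp.2.le hk
  exact ⟨hupper, hlower, fun hpc => hform ((one_le_div hp.1).2 hpc.le)⟩
end
end

section
/- Let μ be a Borel probability measure on ℝ with continuous cdf F_U, let p_1 ∈ (0,1), c ∈ [0,1], and ε ∈ [0,1]. Then there exists a probability measure ν on ℝ × {0,1} whose first marginal is μ, which satisfies ν(ℝ × {1}) = p_1 and the c-dependence condition (there is a measurable g : ℝ → [0,1] with ν(A × {1}) = ∫_A g dμ for all Borel A and |g(u) − p_1| ≤ c for μ-a.e. u), and such that for all u ∈ ℝ: ν((−∞,u] × {1})/p_1 = ε·F̲(u; p_1) + (1−ε)·F̄(u; p_1) and ν((−∞,u] × {0})/(1−p_1) = (1−ε)·F̲(u; 1−p_1) + ε·F̄(u; 1−p_1). -/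
open MeasureTheory Set

noncomputable section

/-!
A joint law of `(U, X)` with `U ∼ μ` amounts to a propensity `g u = P(X = 1 | U = u)`, and
`c`-dependence confines `g` to `[b, a]` with `b = max (p - c) 0` and `a = min (p + c) 1`. To make
`P(U ≤ u | X = 1)` as large as possible, `g` should equal `a` on the lowest quantiles of `U` and
`b` above them, with the switch placed so that `g` has mean `p`; continuity of the cdf makes that
placement exact, and the resulting conditional cdf is the upper bound.

Exchanging the roles of `X = 1` and `X = 0` replaces `(g, p)` by `(1 - g, 1 - p)`, and the lower
bound for `p` is complementary to the upper bound for `1 - p`. So the lower bound is attained by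
`1 - h`, where `h` is extremal for `1 - p`, and mixing the two extremal propensities with weight
`ε` gives the required law.
-/

section BoundFunctions

variable {F : ℝ → ℝ} {p c u : ℝ}

lemma mul_Fupper (hp : 0 < p) :
    p * Fupper F p c u = min (min (p * F u + c * min (F u) (1 - F u)) (F u)) p := by
  rw [Fupper, mul_min_of_nonneg _ _ hp.le, mul_min_of_nonneg _ _ hp.le, mul_one,
    mul_div_cancel₀ _ hp.ne', mul_add, ← mul_assoc, mul_div_cancel₀ _ hp.ne']

lemma mul_Flower (hp : 0 < p) :
    p * Flower F p c u = max (max (p * F u - c * min (F u) (1 - F u)) (F u - 1 + p)) 0 := by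
  rw [Flower, mul_max_of_nonneg _ _ hp.le, mul_max_of_nonneg _ _ hp.le, mul_zero, mul_sub,
    ← mul_assoc, mul_div_cancel₀ _ hp.ne', mul_add, mul_div_cancel₀ _ hp.ne', mul_one]

/- The law of total probability, for a joint law attaining the lower bound given `X = 1` and hence
the upper bound given `X = 0`. -/
lemma mul_Flower_add_one_sub_mul_Fupper (hp0 : 0 < p) (hp1 : p < 1) :
    p * Flower F p c u + (1 - p) * Fupper F (1 - p) c u = F u := by
  rw [mul_Flower hp0, mul_Fupper (sub_pos.2 hp1), ← eq_sub_iff_add_eq, ← max_sub_sub_left,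
    ← max_sub_sub_left, sub_self, max_right_comm]
  refine congrArg₂ max (congrArg₂ max ?_ ?_) ?_ <;> ring

end BoundFunctions

section ExtremalValues

/-- The smallest propensity score allowed by `c`-dependence around `p`. -/
def minPropensity (p c : ℝ) : ℝ := max (p - c) 0

/-- The largest propensity score allowed by `c`-dependence around `p`. -/
def maxPropensity (p c : ℝ) : ℝ := min (p + c) 1

/-- The weight of `maxPropensity p c` in the two-point mixture of the extreme propensities that has
mean `p`. When `c = 0` the two extremes coincide and the quotient takes the junk value `0 / 0 = 0`,
which is as good as any other. -/
def propensityCutoff (p c : ℝ) : ℝ :=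
  (p - minPropensity p c) / (maxPropensity p c - minPropensity p c)

variable {p c : ℝ}

lemma minPropensity_le (hp : 0 ≤ p) (hc : 0 ≤ c) : minPropensity p c ≤ p :=
  max_le (sub_le_self p hc) hp

lemma le_maxPropensity (hp : p ≤ 1) (hc : 0 ≤ c) : p ≤ maxPropensity p c :=
  le_min (le_add_of_nonneg_right hc) hp

lemma propensityCutoff_mem_Icc (hp : p ∈ Icc 0 1) (hc : 0 ≤ c) :
    propensityCutoff p c ∈ Icc 0 1 := by
  have hmin := minPropensity_le hp.1 hc
  have hmax := le_maxPropensity hp.2 hc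
  exact ⟨div_nonneg (by linarith) (by linarith), div_le_one_of_le₀ (by linarith) (by linarith)⟩

lemma sub_mul_propensityCutoff (hp : p ∈ Icc 0 1) (hc : 0 ≤ c) :
    (maxPropensity p c - minPropensity p c) * propensityCutoff p c = p - minPropensity p c := by
  have hmin := minPropensity_le hp.1 hc
  have hmax := le_maxPropensity hp.2 hc
  exact mul_div_cancel_of_imp' fun h => by linarith

lemma one_sub_minPropensity_one_sub : 1 - minPropensity (1 - p) c = maxPropensity p c := by
  rw [minPropensity, maxPropensity, ← min_sub_sub_left, sub_zero]
  congr 1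
  ring

lemma one_sub_maxPropensity_one_sub : 1 - maxPropensity (1 - p) c = minPropensity p c := by
  rw [sub_eq_iff_eq_add, ← sub_eq_iff_eq_add', ← one_sub_minPropensity_one_sub, sub_sub_cancel]

lemma min_min_mul_add_eq_min_maxPropensity_mul {x : ℝ} (hx : x ∈ Icc 0 1) (hc : 0 ≤ c) :
    min (min (p * x + c * min x (1 - x)) x) p =
      min (maxPropensity p c * x) (p - minPropensity p c * (1 - x)) := by
  have hx' : 0 ≤ 1 - x := sub_nonneg.2 hx.2
  calc min (min (p * x + c * min x (1 - x)) x) p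
      = min (min (min ((p + c) * x) (p - (p - c) * (1 - x))) x) p := by
        rw [mul_min_of_nonneg _ _ hc, ← min_add_add_left]
        congr 3 <;> ring
    _ = min (min ((p + c) * x) x) (min (p - (p - c) * (1 - x)) p) := by
        rw [min_assoc, min_min_min_comm]
    _ = min (maxPropensity p c * x) (p - minPropensity p c * (1 - x)) := by
        rw [maxPropensity, minPropensity, min_mul_of_nonneg _ _ hx.1, max_mul_of_nonneg _ _ hx',
          ← min_sub_sub_left, one_mul, zero_mul, sub_zero]

lemma mul_Fupper_eq_min_propensityCutoff {F : ℝ → ℝ} {u : ℝ} (hF : F u ∈ Icc 0 1)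
    (hp0 : 0 < p) (hp1 : p ≤ 1) (hc : 0 ≤ c) :
    p * Fupper F p c u = minPropensity p c * F u +
      (maxPropensity p c - minPropensity p c) * min (F u) (propensityCutoff p c) := by
  have hgap : 0 ≤ maxPropensity p c - minPropensity p c :=
    sub_nonneg.2 ((minPropensity_le hp0.le hc).trans (le_maxPropensity hp1 hc))
  rw [mul_Fupper hp0, min_min_mul_add_eq_min_maxPropensity_mul hF hc, mul_min_of_nonneg _ _ hgap,
    sub_mul_propensityCutoff ⟨hp0.le, hp1⟩ hc, ← min_add_add_left]
  congr 1 <;> ring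

end ExtremalValues

section ContinuousCdf

open ProbabilityTheory

variable {μ : Measure ℝ}

lemma exists_cdf_eq (hF : Continuous (cdf μ)) {t : ℝ} (ht : t ∈ Ioo 0 1) : ∃ v, cdf μ v = t :=
  mem_range_of_exists_le_of_exists_ge hF
    (((tendsto_cdf_atBot μ).eventually (gt_mem_nhds ht.1)).exists.imp fun _ => le_of_lt)
    (((tendsto_cdf_atTop μ).eventually (lt_mem_nhds ht.2)).exists.imp fun _ => le_of_lt)

lemma measurableSet_cdf_le {t : ℝ} : MeasurableSet {v | cdf μ v ≤ t} :=
  measurableSet_le (monotone_cdf μ).measurable measurable_const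

variable [IsProbabilityMeasure μ]

lemma measureReal_cdf_le (hF : Continuous (cdf μ)) {t : ℝ} (ht : t ∈ Icc 0 1) :
    μ.real {v | cdf μ v ≤ t} = t := by
  apply le_antisymm
  · refine le_of_forall_gt_imp_ge_of_dense fun s hts => ?_
    rcases le_or_gt 1 s with hs | hs
    · exact measureReal_le_one.trans hs
    · obtain ⟨v, rfl⟩ := exists_cdf_eq hF ⟨ht.1.trans_lt hts, hs⟩
      rw [cdf_eq_real]
      exact measureReal_mono fun w hw => ((monotone_cdf μ).reflect_lt (hw.trans_lt hts)).le
  · refine le_of_forall_lt_imp_le_of_dense fun s hst => ?_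
    rcases le_or_gt s 0 with hs | hs
    · exact hs.trans measureReal_nonneg
    · obtain ⟨v, rfl⟩ := exists_cdf_eq hF ⟨hs, hst.trans_le ht.2⟩
      rw [cdf_eq_real]
      exact measureReal_mono fun w hw => (monotone_cdf μ hw).trans hst.le

lemma measureReal_Iic_inter_cdf_le (hF : Continuous (cdf μ)) {t : ℝ} (ht : t ∈ Icc 0 1) (u : ℝ) :
    μ.real (Iic u ∩ {v | cdf μ v ≤ t}) = min (cdf μ u) t := by
  rcases le_or_gt (cdf μ u) t with hut | htu
  · have hsub : Iic u ⊆ {v | cdf μ v ≤ t} := fun v hv => (monotone_cdf μ hv).trans hut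
    rw [inter_eq_left.2 hsub, min_eq_left hut, cdf_eq_real]
  · have hsub : {v | cdf μ v ≤ t} ⊆ Iic u := fun v hv =>
      ((monotone_cdf μ).reflect_lt (hv.trans_lt htu)).le
    rw [inter_eq_right.2 hsub, min_eq_right htu.le, measureReal_cdf_le hF ht]

end ContinuousCdf

section UpperPropensity

open ProbabilityTheory

/-- The propensity score with mean `p` that attains the upper bound `Fupper`: as large as
`c`-dependence allows on the lowest quantiles of `μ`, as small as it allows above them. -/
def upperPropensity (μ : Measure ℝ) (p c u : ℝ) : ℝ :=
  if cdf μ u ≤ propensityCutoff p c then maxPropensity p c else minPropensity p c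

variable {μ : Measure ℝ} {p c : ℝ}

lemma measurable_upperPropensity : Measurable (upperPropensity μ p c) :=
  Measurable.ite measurableSet_cdf_le measurable_const measurable_const

lemma upperPropensity_mem_Icc (hp : p ∈ Icc 0 1) (hc : 0 ≤ c) (u : ℝ) :
    upperPropensity μ p c u ∈ Icc (minPropensity p c) (maxPropensity p c) := by
  have hle := (minPropensity_le hp.1 hc).trans (le_maxPropensity hp.2 hc)
  unfold upperPropensity
  split_ifs
  exacts [right_mem_Icc.2 hle, left_mem_Icc.2 hle]

lemma upperPropensity_eq_add_indicator :
    upperPropensity μ p c = fun u => minPropensity p c +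
      {v | cdf μ v ≤ propensityCutoff p c}.indicator
        (fun _ => maxPropensity p c - minPropensity p c) u := by
  funext u
  by_cases hu : cdf μ u ≤ propensityCutoff p c <;> simp [upperPropensity, hu]

lemma integrable_upperPropensity [IsFiniteMeasure μ] : Integrable (upperPropensity μ p c) μ := by
  rw [upperPropensity_eq_add_indicator]
  exact (integrable_const _).add ((integrable_const _).indicator measurableSet_cdf_le)

lemma setIntegral_upperPropensity [IsFiniteMeasure μ] (A : Set ℝ) :
    ∫ u in A, upperPropensity μ p c u ∂μ = minPropensity p c * μ.real A +
      (maxPropensity p c - minPropensity p c) *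
        μ.real (A ∩ {v | cdf μ v ≤ propensityCutoff p c}) := by
  rw [upperPropensity_eq_add_indicator, integral_add (integrable_const _)
    ((integrable_const _).indicator measurableSet_cdf_le), setIntegral_indicator
    measurableSet_cdf_le, setIntegral_const, setIntegral_const, smul_eq_mul, smul_eq_mul,
    mul_comm, mul_comm (μ.real _)]

variable [IsProbabilityMeasure μ]

lemma integral_upperPropensity (hF : Continuous (cdf μ)) (hp : p ∈ Icc 0 1) (hc : 0 ≤ c) :
    ∫ u, upperPropensity μ p c u ∂μ = p := by
  rw [← setIntegral_univ, setIntegral_upperPropensity, univ_inter,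
    measureReal_cdf_le hF (propensityCutoff_mem_Icc hp hc), sub_mul_propensityCutoff hp hc,
    probReal_univ, mul_one, add_sub_cancel]

lemma setIntegral_Iic_upperPropensity (hF : Continuous (cdf μ)) (hp0 : 0 < p) (hp1 : p ≤ 1)
    (hc : 0 ≤ c) (u : ℝ) :
    ∫ v in Iic u, upperPropensity μ p c v ∂μ = p * Fupper (cdf μ) p c u := by
  rw [setIntegral_upperPropensity,
    measureReal_Iic_inter_cdf_le hF (propensityCutoff_mem_Icc ⟨hp0.le, hp1⟩ hc), ← cdf_eq_real,
    mul_Fupper_eq_min_propensityCutoff ⟨cdf_nonneg μ u, cdf_le_one μ u⟩ hp0 hp1 hc]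

end UpperPropensity

section MixedPropensity

open ProbabilityTheory

/-- The propensity score with mean `p` that attains the mixture of `Flower` and `Fupper` with
weights `ε` and `1 - ε`. The part attaining `Flower` is the upper propensity for the complementary
event, subtracted from `1`. -/
def mixedPropensity (μ : Measure ℝ) (p c ε u : ℝ) : ℝ :=
  ε * (1 - upperPropensity μ (1 - p) c u) + (1 - ε) * upperPropensity μ p c u

variable {μ : Measure ℝ} {p c ε : ℝ}

lemma one_sub_mixedPropensity (u : ℝ) :
    1 - mixedPropensity μ p c ε u = mixedPropensity μ (1 - p) c (1 - ε) u := by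
  rw [mixedPropensity, mixedPropensity, sub_sub_cancel, sub_sub_cancel]
  ring

lemma measurable_mixedPropensity : Measurable (mixedPropensity μ p c ε) :=
  ((measurable_upperPropensity.const_sub 1).const_mul ε).add
    (measurable_upperPropensity.const_mul (1 - ε))

lemma mixedPropensity_mem_Icc (hp : p ∈ Icc 0 1) (hc : 0 ≤ c) (hε : ε ∈ Icc 0 1) (u : ℝ) :
    mixedPropensity μ p c ε u ∈ Icc (minPropensity p c) (maxPropensity p c) := by
  have hlower :
      1 - upperPropensity μ (1 - p) c u ∈ Icc (minPropensity p c) (maxPropensity p c) := by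
    obtain ⟨hmin, hmax⟩ := upperPropensity_mem_Icc (μ := μ) (Icc.one_sub_mem hp) hc u
    rw [← one_sub_minPropensity_one_sub, ← one_sub_maxPropensity_one_sub]
    exact ⟨sub_le_sub_left hmax 1, sub_le_sub_left hmin 1⟩
  exact convex_Icc _ _ hlower (upperPropensity_mem_Icc hp hc u) hε.1 (sub_nonneg.2 hε.2)
    (add_sub_cancel ε 1)

lemma mixedPropensity_mem_Icc_zero_one (hp : p ∈ Icc 0 1) (hc : 0 ≤ c) (hε : ε ∈ Icc 0 1)
    (u : ℝ) : mixedPropensity μ p c ε u ∈ Icc 0 1 :=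
  Icc_subset_Icc (le_max_right _ _) (min_le_right _ _) (mixedPropensity_mem_Icc hp hc hε u)

lemma abs_mixedPropensity_sub_le (hp : p ∈ Icc 0 1) (hc : 0 ≤ c) (hε : ε ∈ Icc 0 1) (u : ℝ) :
    |mixedPropensity μ p c ε u - p| ≤ c := by
  rw [abs_sub_comm, mem_Icc_iff_abs_le]
  exact Icc_subset_Icc (le_max_left _ _) (min_le_left _ _) (mixedPropensity_mem_Icc hp hc hε u)

lemma setIntegral_mixedPropensity [IsFiniteMeasure μ] (A : Set ℝ) :
    ∫ u in A, mixedPropensity μ p c ε u ∂μ =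
      ε * (μ.real A - ∫ u in A, upperPropensity μ (1 - p) c u ∂μ) +
        (1 - ε) * ∫ u in A, upperPropensity μ p c u ∂μ := by
  have hint {q : ℝ} : IntegrableOn (upperPropensity μ q c) A μ :=
    integrable_upperPropensity.integrableOn
  have hint_one_sub : IntegrableOn (fun u => 1 - upperPropensity μ (1 - p) c u) A μ :=
    (integrable_const 1).sub hint
  simp only [mixedPropensity]
  rw [integral_add (hint_one_sub.const_mul ε) (hint.const_mul (1 - ε)), integral_const_mul,
    integral_const_mul, integral_sub (integrable_const 1) hint, setIntegral_const, smul_eq_mul,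
    mul_one]

variable [IsProbabilityMeasure μ]

lemma integral_mixedPropensity (hF : Continuous (cdf μ)) (hp : p ∈ Icc 0 1) (hc : 0 ≤ c) :
    ∫ u, mixedPropensity μ p c ε u ∂μ = p := by
  rw [← setIntegral_univ, setIntegral_mixedPropensity, setIntegral_univ, setIntegral_univ,
    integral_upperPropensity hF hp hc, integral_upperPropensity hF (Icc.one_sub_mem hp) hc,
    probReal_univ]
  ring

lemma setIntegral_Iic_mixedPropensity (hF : Continuous (cdf μ)) (hp : p ∈ Ioo 0 1) (hc : 0 ≤ c)
    (u : ℝ) :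
    ∫ v in Iic u, mixedPropensity μ p c ε v ∂μ =
      p * (ε * Flower (cdf μ) p c u + (1 - ε) * Fupper (cdf μ) p c u) := by
  rw [setIntegral_mixedPropensity, ← cdf_eq_real,
    setIntegral_Iic_upperPropensity hF hp.1 hp.2.le hc,
    setIntegral_Iic_upperPropensity hF (sub_pos.2 hp.2) (sub_le_self 1 hp.1.le) hc,
    ← mul_Flower_add_one_sub_mul_Fupper (F := cdf μ) (c := c) (u := u) hp.1 hp.2]
  ring

end MixedPropensity

section JointLaw

variable {α : Type*} [MeasurableSpace α] {μ : Measure α} {g : α → ℝ}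

/-- The law of `(U, X)` when `U` has law `μ` and `X ∈ {0, 1}` has propensity score
`P(X = 1 | U = u) = g u`. -/
def jointLaw (μ : Measure α) (g : α → ℝ) : Measure (α × ℕ) :=
  (μ.withDensity fun u => ENNReal.ofReal (g u)).map (fun u => (u, 1)) +
    (μ.withDensity fun u => ENNReal.ofReal (1 - g u)).map (fun u => (u, 0))

lemma map_fst_jointLaw (hg : Measurable g) (hg01 : ∀ u, g u ∈ Icc 0 1) :
    (jointLaw μ g).map Prod.fst = μ := by
  have hsum : ((fun u => ENNReal.ofReal (g u)) + fun u => ENNReal.ofReal (1 - g u)) = 1 := by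
    funext u
    rw [Pi.add_apply, ← ENNReal.ofReal_add (hg01 u).1 (sub_nonneg.2 (hg01 u).2),
      add_sub_cancel, ENNReal.ofReal_one, Pi.one_apply]
  rw [jointLaw, Measure.map_add _ _ measurable_fst, Measure.map_map measurable_fst (by fun_prop),
    Measure.map_map measurable_fst (by fun_prop)]
  change Measure.map id _ + Measure.map id _ = μ
  rw [Measure.map_id, Measure.map_id, ← withDensity_add_left (by fun_prop), hsum,
    withDensity_one]

lemma isProbabilityMeasure_jointLaw [hμ : IsProbabilityMeasure μ] (hg : Measurable g)
    (hg01 : ∀ u, g u ∈ Icc 0 1) : IsProbabilityMeasure (jointLaw μ g) := by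
  rw [← map_fst_jointLaw (μ := μ) hg hg01] at hμ
  exact Measure.isProbabilityMeasure_of_map Prod.fst

lemma measureReal_jointLaw_prod_singleton_one (hg : Measurable g) (hg0 : ∀ u, 0 ≤ g u) {A : Set α}
    (hA : MeasurableSet A) : (jointLaw μ g).real (A ×ˢ {1}) = ∫ u in A, g u ∂μ := by
  have hA1 : MeasurableSet (A ×ˢ ({1} : Set ℕ)) := hA.prod (measurableSet_singleton 1)
  rw [measureReal_def, jointLaw, Measure.add_apply, Measure.map_apply (by fun_prop) hA1,
    Measure.map_apply (by fun_prop) hA1, mk_preimage_prod_left (mem_singleton 1),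
    mk_preimage_prod_left_eq_empty (by simp), measure_empty, add_zero, withDensity_apply _ hA,
    integral_eq_lintegral_of_nonneg_ae (.of_forall hg0) hg.aestronglyMeasurable]

lemma measureReal_jointLaw_prod_singleton_zero (hg : Measurable g) (hg1 : ∀ u, g u ≤ 1) {A : Set α}
    (hA : MeasurableSet A) : (jointLaw μ g).real (A ×ˢ {0}) = ∫ u in A, (1 - g u) ∂μ := by
  have hA0 : MeasurableSet (A ×ˢ ({0} : Set ℕ)) := hA.prod (measurableSet_singleton 0)
  rw [measureReal_def, jointLaw, Measure.add_apply, Measure.map_apply (by fun_prop) hA0,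
    Measure.map_apply (by fun_prop) hA0, mk_preimage_prod_left (mem_singleton 0),
    mk_preimage_prod_left_eq_empty (by simp), measure_empty, zero_add, withDensity_apply _ hA,
    integral_eq_lintegral_of_nonneg_ae (.of_forall fun u => sub_nonneg.2 (hg1 u))
      (hg.const_sub 1).aestronglyMeasurable]

end JointLaw

/-- Sharpness: for every `ε ∈ [0,1]` there is a joint distribution `ν` of `(U, X)` on
`ℝ × {0,1}` with first marginal `μ`, `ν(ℝ × {1}) = p₁`, satisfying `c`-dependence, whose
conditional cdfs given `X = 1` and `X = 0` are the indicated convex combinations of the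
bound functions. -/
theorem c_dep_cdf_bounds_sharp (μ : Measure ℝ) [IsProbabilityMeasure μ]
    (hFcont : Continuous fun u : ℝ => (μ (Iic u)).toReal)
    (p1 : ℝ) (hp1 : p1 ∈ Set.Ioo (0:ℝ) 1) (c : ℝ) (hc : c ∈ Set.Icc (0:ℝ) 1)
    (ε : ℝ) (hε : ε ∈ Set.Icc (0:ℝ) 1) :
    ∃ ν : Measure (ℝ × ℕ), IsProbabilityMeasure ν ∧
      ν.map Prod.fst = μ ∧
      (ν (univ ×ˢ ({1} : Set ℕ))).toReal = p1 ∧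
      (∃ g : ℝ → ℝ, Measurable g ∧ (∀ u, 0 ≤ g u ∧ g u ≤ 1) ∧
        (∀ A : Set ℝ, MeasurableSet A →
          (ν (A ×ˢ ({1} : Set ℕ))).toReal = ∫ u in A, g u ∂μ) ∧
        (∀ᵐ u ∂μ, |g u - p1| ≤ c)) ∧
      (∀ u : ℝ,
        (ν (Iic u ×ˢ ({1} : Set ℕ))).toReal / p1 =
          ε * Flower (fun v : ℝ => (μ (Iic v)).toReal) p1 c u
            + (1 - ε) * Fupper (fun v : ℝ => (μ (Iic v)).toReal) p1 c u) ∧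
      (∀ u : ℝ,
        (ν (Iic u ×ˢ ({0} : Set ℕ))).toReal / (1 - p1) =
          (1 - ε) * Flower (fun v : ℝ => (μ (Iic v)).toReal) (1 - p1) c u
            + ε * Fupper (fun v : ℝ => (μ (Iic v)).toReal) (1 - p1) c u) := by
  have hcdf : (fun v => (μ (Iic v)).toReal) = ProbabilityTheory.cdf μ :=
    funext fun v => (ProbabilityTheory.cdf_eq_real μ v).symm
  rw [hcdf] at hFcont ⊢
  have hp : p1 ∈ Icc 0 1 := Ioo_subset_Icc_self hp1
  set g := mixedPropensity μ p1 c ε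
  have hg : Measurable g := measurable_mixedPropensity
  have hg01 : ∀ u, g u ∈ Icc 0 1 := mixedPropensity_mem_Icc_zero_one hp hc.1 hε
  have hone {A : Set ℝ} (hA : MeasurableSet A) :
      (jointLaw μ g (A ×ˢ {1})).toReal = ∫ u in A, g u ∂μ :=
    measureReal_jointLaw_prod_singleton_one hg (fun u => (hg01 u).1) hA
  have hzero (u : ℝ) : (jointLaw μ g (Iic u ×ˢ {0})).toReal = ∫ v in Iic u, (1 - g v) ∂μ :=
    measureReal_jointLaw_prod_singleton_zero hg (fun v => (hg01 v).2) measurableSet_Iic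
  refine ⟨jointLaw μ g, isProbabilityMeasure_jointLaw hg hg01, map_fst_jointLaw hg hg01, ?_,
    ⟨g, hg, hg01, fun _ => hone, .of_forall (abs_mixedPropensity_sub_le hp hc.1 hε)⟩,
    fun u => ?_, fun u => ?_⟩
  · rw [hone .univ, setIntegral_univ, integral_mixedPropensity hFcont hp hc.1]
  · rw [hone measurableSet_Iic, setIntegral_Iic_mixedPropensity hFcont hp1 hc.1,
      mul_div_cancel_left₀ _ hp1.1.ne']
  · simp only [hzero, g, one_sub_mixedPropensity]
    rw [setIntegral_Iic_mixedPropensity hFcont (Ioo.one_sub_mem hp1) hc.1, sub_sub_cancel,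
      mul_div_cancel_left₀ _ (sub_pos.2 hp1.2).ne']
end
end

section
/- Let μ be a Borel probability measure on ℝ with continuous cdf F_U, let p ∈ (0,1) and c ∈ (0,1]. Set d = min{c, 1−p} / (min{p + c, 1} − max{p − c, 0}); then d ∈ (0,1), so by the intermediate value theorem there exists u* ∈ ℝ with F_U(u*) = d. Define P̲(u) = max{p − c, 0} for u ≤ u* and P̲(u) = min{p + c, 1} for u > u*. Then ∫_ℝ P̲(u) dμ(u) = p. -/
open MeasureTheory Set

noncomputable section

/-! Write `lo = max (p - c) 0` and `hi = min (p + c) 1`, so that `lo < p < hi`. Since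
`min c (1 - p) = hi - p`, the prescribed measure `d = (hi - p) / (hi - lo)` of the set on which the
value is `lo` is the weight for which `d * lo + (1 - d) * hi = p`. -/

theorem sub_div_sub_mem_Ioo {K : Type*} [Field K] [LinearOrder K] [IsStrictOrderedRing K]
    {lo p hi : K} (hlo : lo < p) (hhi : p < hi) : (hi - p) / (hi - lo) ∈ Ioo (0 : K) 1 := by
  have hpos : 0 < hi - lo := sub_pos.2 (hlo.trans hhi)
  exact ⟨div_pos (sub_pos.2 hhi) hpos, (div_lt_one hpos).2 (sub_lt_sub_left hlo hi)⟩

section TwoValued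

variable {Ω : Type*} [MeasurableSpace Ω] {μ : Measure Ω} {s : Set Ω} [DecidablePred (· ∈ s)]

theorem integral_piecewise_const [IsFiniteMeasure μ] {E : Type*} [NormedAddCommGroup E]
    [NormedSpace ℝ E] [CompleteSpace E] (hs : MeasurableSet s) (x y : E) :
    ∫ ω, s.piecewise (fun _ ↦ x) (fun _ ↦ y) ω ∂μ = μ.real s • x + μ.real sᶜ • y := by
  rw [integral_piecewise hs integrableOn_const integrableOn_const, setIntegral_const,
    setIntegral_const]

theorem integral_piecewise_const_eq_of_measureReal_eq [IsProbabilityMeasure μ]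
    (hs : MeasurableSet s) {lo p hi : ℝ} (hne : lo ≠ hi)
    (hμs : μ.real s = (hi - p) / (hi - lo)) :
    ∫ ω, s.piecewise (fun _ ↦ lo) (fun _ ↦ hi) ω ∂μ = p := by
  have hsub : hi - lo ≠ 0 := sub_ne_zero.2 hne.symm
  calc ∫ ω, s.piecewise (fun _ ↦ lo) (fun _ ↦ hi) ω ∂μ
      = μ.real s * lo + (1 - μ.real s) * hi := by
        rw [integral_piecewise_const hs, probReal_compl_eq_one_sub hs, smul_eq_mul, smul_eq_mul]
    _ = hi - μ.real s * (hi - lo) := by ring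
    _ = p := by rw [hμs, div_mul_cancel₀ _ hsub, sub_sub_cancel]

end TwoValued

theorem extreme_propensity_integrates_to_p_general {Ω : Type*} [MeasurableSpace Ω]
    (μ : Measure Ω) [IsProbabilityMeasure μ] {p c : ℝ} (hp : p ∈ Ioo (0 : ℝ) 1) (hc : 0 < c) :
    min c (1 - p) / (min (p + c) 1 - max (p - c) 0) ∈ Ioo (0 : ℝ) 1 ∧
    ∀ (s : Set Ω) [DecidablePred (· ∈ s)], MeasurableSet s →
      μ.real s = min c (1 - p) / (min (p + c) 1 - max (p - c) 0) →
      ∫ ω, s.piecewise (fun _ ↦ max (p - c) 0) (fun _ ↦ min (p + c) 1) ω ∂μ = p := by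
  have hlo : max (p - c) 0 < p := max_lt (sub_lt_self p hc) hp.1
  have hhi : p < min (p + c) 1 := lt_min (lt_add_of_pos_right p hc) hp.2
  have hmin : min c (1 - p) = min (p + c) 1 - p := by
    rw [← min_sub_sub_right, add_sub_cancel_left]
  rw [hmin]
  exact ⟨sub_div_sub_mem_Ioo hlo hhi, fun s _ hs hμs ↦
    integral_piecewise_const_eq_of_measureReal_eq hs (hlo.trans hhi).ne hμs⟩

/-- The extreme treatment-assignment probability `P̲` integrates to `p`: with
`d = min{c, 1-p} / (min{p+c,1} - max{p-c,0}) ∈ (0,1)` and any `u*` with `F_U(u*) = d`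
(such `u*` exists by the intermediate value theorem), the function equal to
`max{p-c, 0}` for `u ≤ u*` and `min{p+c, 1}` for `u > u*` integrates to `p` under `μ`. -/
theorem extreme_propensity_integrates_to_p (μ : Measure ℝ) [IsProbabilityMeasure μ]
    (hFcont : Continuous fun u : ℝ => (μ (Iic u)).toReal)
    (p c : ℝ) (hp : p ∈ Set.Ioo (0:ℝ) 1) (hc : c ∈ Set.Ioc (0:ℝ) 1) :
    min c (1 - p) / (min (p + c) 1 - max (p - c) 0) ∈ Set.Ioo (0:ℝ) 1 ∧
    ∀ ustar : ℝ,
      (μ (Iic ustar)).toReal = min c (1 - p) / (min (p + c) 1 - max (p - c) 0) →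
      ∫ u, (if u ≤ ustar then max (p - c) 0 else min (p + c) 1) ∂μ = p :=
  have h := extreme_propensity_integrates_to_p_general μ hp hc.1
  ⟨h.1, fun ustar hustar ↦ h.2 (Iic ustar) measurableSet_Iic hustar⟩
end
end

section
/- Assume the potential outcomes setup and suppose X is c-dependent with both Y_1 and Y_0, for c ∈ [0,1]. Then for every τ ∈ (0,1), the quantile treatment effect Q_{Y_1}(τ) − Q_{Y_0}(τ) lies in the interval [ Q̲^c_1(τ) − Q̄^c_0(τ), Q̄^c_1(τ) − Q̲^c_0(τ) ] (with possibly infinite endpoints). -/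
open MeasureTheory Set

noncomputable section

/-- `P(X = x)`. -/
def px {Ω : Type*} [MeasurableSpace Ω] (P : Measure Ω) (X : Ω → ℕ) (x : ℕ) : ℝ :=
  (P {ω | X ω = x}).toReal

/-- The conditional cdf `y ↦ P(V ≤ y ∣ X = x)`. -/
def condCDF' {Ω : Type*} [MeasurableSpace Ω] (P : Measure Ω) (X : Ω → ℕ) (V : Ω → ℝ)
    (x : ℕ) (y : ℝ) : ℝ :=
  (P ({ω | V ω ≤ y} ∩ {ω | X ω = x})).toReal / (P {ω | X ω = x}).toReal

/-- The (extended-real-valued) quantile function of a cdf `G`, equal to the left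
inverse of `G` on `(0,1)` and extended by the support endpoints `lo` at `0` and
`hi` at `1`. -/
def Qgen (G : ℝ → ℝ) (lo hi : EReal) (τ : ℝ) : EReal :=
  if τ ≤ 0 then lo else if 1 ≤ τ then hi
  else ((sInf {y : ℝ | τ ≤ G y} : ℝ) : EReal)

/-- The clipped quantile level used in the upper quantile bound. -/
def qUp (p c τ : ℝ) : ℝ := min (min (τ + c / p * min τ (1 - τ)) (τ / p)) 1

/-- The clipped quantile level used in the lower quantile bound. -/
def qLo (p c τ : ℝ) : ℝ := max (max (τ - c / p * min τ (1 - τ)) ((τ - 1) / p + 1)) 0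

/-- The `τ`-th quantile of the random variable `V`. -/
def quant {Ω : Type*} [MeasurableSpace Ω] (P : Measure Ω) (V : Ω → ℝ) (τ : ℝ) : ℝ :=
  sInf {z : ℝ | τ ≤ (P {ω | V ω ≤ z}).toReal}

/-
Under `c`-dependence, the probability of `{X = x, V ∈ A}` differs from `P(X = x) P(V ∈ A)` by at
most `c P(V ∈ A)`. Taking for `A` a half-line and its complement, the cdf `G` of `V` given `X = x`
and the cdf `F` of `V` satisfy `|G - F| ≤ (c / p_x) min(F, 1 - F)`. Together with `p_x G ≤ F` and
`p_x (1 - G) ≤ 1 - F` this says that `G` lies between `qLo p_x c ∘ F` and `qUp p_x c ∘ F`. Since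
`qLo p_x c` is monotone, and `qUp p_x c` strictly increases until it reaches `1`, these bounds on
`G` can be inverted into bounds on the quantiles of `V`.
-/

open ProbabilityTheory

section QuantileLevels

variable {p c a b τ : ℝ}

lemma qLo_eq_one_sub_qUp (p c τ : ℝ) : qLo p c τ = 1 - qUp p c (1 - τ) := by
  have hlevel : τ - c / p * min τ (1 - τ) = 1 - (1 - τ + c / p * min (1 - τ) τ) := by
    rw [min_comm]; ring
  have hclip : (τ - 1) / p + 1 = 1 - (1 - τ) / p := by ring
  have hzero : (0 : ℝ) = 1 - 1 := (sub_self 1).symm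
  rw [qLo, qUp, sub_sub_cancel, hlevel, hclip, max_sub_sub_left, hzero, max_sub_sub_left]

lemma qUp_pos (hp : 0 < p) (hc : 0 ≤ c) (hτ : τ ∈ Ioc 0 1) : 0 < qUp p c τ := by
  have hmin : 0 ≤ min τ (1 - τ) := le_min hτ.1.le (sub_nonneg.2 hτ.2)
  have hτ₀ : 0 < τ := hτ.1
  exact lt_min (lt_min (by positivity) (by positivity)) one_pos

lemma qLo_lt_one (hp : 0 < p) (hc : 0 ≤ c) (hτ : τ ∈ Ico 0 1) : qLo p c τ < 1 := by
  rw [qLo_eq_one_sub_qUp]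
  exact sub_lt_self 1 (qUp_pos hp hc ⟨sub_pos.2 hτ.2, sub_le_self 1 hτ.1⟩)

/- On `[1/2, 1]` the level `b + k * (1 - b)` has slope `1 - k`; the level is below `1` only if
`k < 1`, that is, only if this slope is positive. -/
lemma add_mul_min_lt_add_mul_min {k : ℝ} (hk : 0 ≤ k) (hab : a < b) (hb : b ≤ 1)
    (hlt : b + k * min b (1 - b) < 1) : a + k * min a (1 - a) < b + k * min b (1 - b) := by
  rcases min_choice b (1 - b) with hmin | hmin <;> rw [hmin] at hlt ⊢
  · calc a + k * min a (1 - a) ≤ a + k * a := by gcongr; exact min_le_left _ _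
      _ < b + k * b := add_lt_add_of_lt_of_le hab (mul_le_mul_of_nonneg_left hab.le hk)
  · have hk1 : k < 1 := by
      by_contra! hk1
      nlinarith [mul_nonneg (sub_nonneg.2 hk1) (sub_nonneg.2 hb)]
    calc a + k * min a (1 - a) ≤ a + k * (1 - a) := by gcongr; exact min_le_right _ _
      _ < b + k * (1 - b) := by nlinarith

lemma qUp_lt_qUp (hp : 0 < p) (hc : 0 ≤ c) (hab : a < b) (hb : b ≤ 1) (hlt : qUp p c b < 1) :
    qUp p c a < qUp p c b := by
  have hratio : a / p < b / p := by gcongr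
  have hlevel := add_mul_min_lt_add_mul_min (div_nonneg hc hp.le) hab hb
  grind [qUp]

lemma monotoneOn_qUp (hp : 0 < p) (hc : 0 ≤ c) : MonotoneOn (qUp p c) (Iic 1) := by
  intro a _ b hb hab
  rcases hab.eq_or_lt with rfl | hab
  · rfl
  rcases lt_or_ge (qUp p c b) 1 with hlt | hge
  · exact (qUp_lt_qUp hp hc hab hb hlt).le
  · exact (min_le_right _ _).trans hge

lemma monotoneOn_qLo (hp : 0 < p) (hc : 0 ≤ c) : MonotoneOn (qLo p c) (Ici 0) := by
  intro a ha b hb hab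
  rw [qLo_eq_one_sub_qUp, qLo_eq_one_sub_qUp]
  have ha' : 1 - a ≤ 1 := sub_le_self 1 ha
  have hb' : 1 - b ≤ 1 := sub_le_self 1 hb
  exact sub_le_sub_left (monotoneOn_qUp hp hc hb' ha' (sub_le_sub_left hab 1)) 1

lemma mem_Icc_qLo_qUp {g : ℝ} (hp : 0 < p) (hg : g ∈ Icc 0 1)
    (hdist : |g - a| ≤ c / p * min a (1 - a)) (hle : p * g ≤ a) (hle' : p * (1 - g) ≤ 1 - a) :
    g ∈ Icc (qLo p c a) (qUp p c a) := by
  have hg_le : g ≤ a / p := by rwa [le_div_iff₀' hp]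
  have hg_ge : 1 - g ≤ (1 - a) / p := by rwa [le_div_iff₀' hp]
  have hclip : (a - 1) / p + 1 = 1 - (1 - a) / p := by ring
  obtain ⟨hdist_ge, hdist_le⟩ := abs_le.1 hdist
  exact ⟨max_le (max_le (by linarith) (by linarith)) hg.1,
    le_min (le_min (by linarith) hg_le) hg.2⟩

end QuantileLevels

section LowerQuantile

/-- The left-continuous quantile function of a law on `ℝ`, the common form of `quant` and of the
finite branch of `Qgen`. It is meaningful for levels in `(0, 1)` only, elsewhere `sInf` may take
its junk value `0`. -/
def lowerQuantile (μ : Measure ℝ) (τ : ℝ) : ℝ := sInf {y | τ ≤ cdf μ y}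

variable {μ ν : Measure ℝ} {s t : ℝ}

lemma nonempty_setOf_le_cdf (μ : Measure ℝ) (ht : t < 1) : {y | t ≤ cdf μ y}.Nonempty :=
  ((tendsto_cdf_atTop μ).eventually_const_le ht).exists

lemma mem_lowerBounds_setOf_le_cdf {y : ℝ} (hy : cdf μ y < t) :
    y ∈ lowerBounds {z | t ≤ cdf μ z} :=
  fun _ hz ↦ ((monotone_cdf μ).reflect_lt (hy.trans_le hz)).le

lemma bddBelow_setOf_le_cdf (μ : Measure ℝ) (ht : 0 < t) : BddBelow {y | t ≤ cdf μ y} :=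
  let ⟨y, hy⟩ := ((tendsto_cdf_atBot μ).eventually_lt_const ht).exists
  ⟨y, mem_lowerBounds_setOf_le_cdf hy⟩

lemma lowerQuantile_le_lowerQuantile (hs : 0 < s) (ht : t < 1)
    (h : ∀ y, t ≤ cdf μ y → s ≤ cdf ν y) : lowerQuantile ν s ≤ lowerQuantile μ t :=
  csInf_le_csInf (bddBelow_setOf_le_cdf ν hs) (nonempty_setOf_le_cdf μ ht) h

lemma coe_lowerQuantile_mem_Icc {lo hi : EReal} (hlo : ∀ y : ℝ, y < lo → cdf μ y = 0)
    (hhi : ∀ y : ℝ, hi < y → cdf μ y = 1) (ht : t ∈ Ioo 0 1) :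
    (lowerQuantile μ t : EReal) ∈ Icc lo hi := by
  constructor
  · by_contra! hlt
    obtain ⟨y, hqy, hylo⟩ := EReal.lt_iff_exists_real_btwn.1 hlt
    have hyq : y ≤ lowerQuantile μ t := le_csInf (nonempty_setOf_le_cdf μ ht.2)
      (mem_lowerBounds_setOf_le_cdf ((hlo y hylo).trans_lt ht.1))
    exact hyq.not_gt (EReal.coe_lt_coe_iff.1 hqy)
  · by_contra! hlt
    obtain ⟨y, hhiy, hyq⟩ := EReal.lt_iff_exists_real_btwn.1 hlt
    have hqy : lowerQuantile μ t ≤ y :=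
      csInf_le (bddBelow_setOf_le_cdf μ ht.1) (ht.2.le.trans_eq (hhi y hhiy).symm)
    exact hqy.not_gt (EReal.coe_lt_coe_iff.1 hyq)

lemma coe_lowerQuantile_mem_Icc_Qgen {lo hi : EReal} {p c τ : ℝ} (hp : 0 < p) (hc : 0 ≤ c)
    (hτ : τ ∈ Ioo 0 1) (hsupp : (lowerQuantile μ τ : EReal) ∈ Icc lo hi)
    (hcdf : ∀ y, cdf ν y ∈ Icc (qLo p c (cdf μ y)) (qUp p c (cdf μ y))) :
    (lowerQuantile μ τ : EReal) ∈
      Icc (Qgen (cdf ν) lo hi (qLo p c τ)) (Qgen (cdf ν) lo hi (qUp p c τ)) := by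
  have hLo_lt_one : qLo p c τ < 1 := qLo_lt_one hp hc ⟨hτ.1.le, hτ.2⟩
  have hUp_pos : 0 < qUp p c τ := qUp_pos hp hc ⟨hτ.1, hτ.2.le⟩
  constructor
  · rw [Qgen, if_neg hLo_lt_one.not_ge]
    split_ifs with hLo
    · exact hsupp.1
    · refine EReal.coe_le_coe_iff.2 (lowerQuantile_le_lowerQuantile (not_le.1 hLo) hτ.2 ?_)
      exact fun y hy ↦ (monotoneOn_qLo hp hc hτ.1.le (cdf_nonneg μ y) hy).trans (hcdf y).1
  · rw [Qgen, if_neg hUp_pos.not_ge]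
    split_ifs with hUp
    · exact hsupp.2
    · refine EReal.coe_le_coe_iff.2 (lowerQuantile_le_lowerQuantile hτ.1 (not_le.1 hUp) ?_)
      intro y hy
      by_contra! hlt
      exact ((hcdf y).2.trans_lt (qUp_lt_qUp hp hc hlt hτ.2.le (not_le.1 hUp))).not_ge hy

end LowerQuantile

section ConditionalLaw

/-- The law of `V` conditional on the event `X = x`, whose cdf is `condCDF' P X V x`. By the
convention for `ProbabilityTheory.cond` it is `0` when that event is null. -/
def condLaw {Ω : Type*} [MeasurableSpace Ω] (P : Measure Ω) (X : Ω → ℕ) (V : Ω → ℝ) (x : ℕ) :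
    Measure ℝ :=
  P[|{ω | X ω = x}].map V

variable {Ω : Type*} [MeasurableSpace Ω] {P : Measure Ω} {X : Ω → ℕ} {V Y : Ω → ℝ} {x : ℕ}
  {A : Set ℝ} {c : ℝ}

lemma condCDF'_congr (h : ∀ ω, X ω = x → Y ω = V ω) : condCDF' P X Y x = condCDF' P X V x := by
  ext y
  have hset : {ω | Y ω ≤ y} ∩ {ω | X ω = x} = {ω | V ω ≤ y} ∩ {ω | X ω = x} := by
    ext ω
    exact and_congr_left fun hω ↦ by simp only [mem_ofPred_eq, h ω hω]
  rw [condCDF', condCDF', hset]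

lemma quant_eq_lowerQuantile [IsProbabilityMeasure P] (hV : Measurable V) (τ : ℝ) :
    quant P V τ = lowerQuantile (P.map V) τ := by
  have := Measure.isProbabilityMeasure_map (μ := P) hV.aemeasurable
  simp only [quant, lowerQuantile, cdf_eq_real, map_measureReal_apply hV measurableSet_Iic]
  rfl

lemma condLaw_real_apply (hX : Measurable X) (hV : Measurable V) (hA : MeasurableSet A) :
    (condLaw P X V x).real A = P.real ({ω | X ω = x} ∩ V ⁻¹' A) / px P X x := by
  have hXx : MeasurableSet {ω | X ω = x} := hX (measurableSet_singleton x)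
  rw [condLaw, map_measureReal_apply hV hA, measureReal_def, cond_apply hXx, ENNReal.toReal_mul,
    ENNReal.toReal_inv, mul_comm]
  rfl

variable [IsFiniteMeasure P]

lemma isProbabilityMeasure_condLaw (hV : Measurable V) (hx : px P X x ≠ 0) :
    IsProbabilityMeasure (condLaw P X V x) :=
  have := cond_isProbabilityMeasure (μ := P) (s := {ω | X ω = x}) fun h ↦ hx (by simp [px, h])
  Measure.isProbabilityMeasure_map hV.aemeasurable

lemma condCDF'_eq_cdf_condLaw (hX : Measurable X) (hV : Measurable V) (hx : px P X x ≠ 0) :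
    condCDF' P X V x = cdf (condLaw P X V x) := by
  have := isProbabilityMeasure_condLaw hV hx
  ext y
  rw [cdf_eq_real, condLaw_real_apply hX hV measurableSet_Iic, condCDF', inter_comm]
  rfl

lemma px_mul_condLaw_real (hX : Measurable X) (hV : Measurable V) (hA : MeasurableSet A) :
    px P X x * (condLaw P X V x).real A = P.real ({ω | X ω = x} ∩ V ⁻¹' A) := by
  rw [condLaw_real_apply hX hV hA]
  refine mul_div_cancel_of_imp' fun hx ↦ ?_
  exact measureReal_mono_null inter_subset_left hx

lemma px_mul_condLaw_real_le (hX : Measurable X) (hV : Measurable V) (hA : MeasurableSet A) :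
    px P X x * (condLaw P X V x).real A ≤ (P.map V).real A := by
  rw [px_mul_condLaw_real hX hV hA, map_measureReal_apply hV hA]
  exact measureReal_mono inter_subset_right

lemma measureReal_inter_one_add_inter_zero (hX : Measurable X) (hX01 : ∀ ω, X ω ≤ 1) (S : Set Ω) :
    P.real ({ω | X ω = 1} ∩ S) + P.real ({ω | X ω = 0} ∩ S) = P.real S := by
  have hcompl : {ω | X ω = 0} = {ω | X ω = 1}ᶜ := by
    ext ω
    have := hX01 ω
    simp only [mem_ofPred_eq, mem_compl_iff]
    lia
  rw [hcompl, inter_comm, inter_comm _ S, ← sdiff_eq]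
  exact measureReal_inter_add_sdiff (hX (measurableSet_singleton 1))

lemma map_real_eq_add_condLaw_real (hX : Measurable X) (hX01 : ∀ ω, X ω ≤ 1) (hV : Measurable V)
    (hA : MeasurableSet A) :
    (P.map V).real A =
      px P X 1 * (condLaw P X V 1).real A + px P X 0 * (condLaw P X V 0).real A := by
  rw [px_mul_condLaw_real hX hV hA, px_mul_condLaw_real hX hV hA,
    measureReal_inter_one_add_inter_zero hX hX01, map_measureReal_apply hV hA]

lemma CDep.abs_measureReal_inter_sub_le (h : CDep P X V c) (hA : MeasurableSet A) :
    |P.real ({ω | X ω = 1} ∩ V ⁻¹' A) - px P X 1 * (P.map V).real A| ≤ c * (P.map V).real A := by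
  obtain ⟨g, hg, hg01, hgA, hgc⟩ := h
  have hg_int : Integrable g (P.map V) := .of_mem_Icc 0 1 hg.aemeasurable (.of_forall hg01)
  have hdiff : P.real ({ω | X ω = 1} ∩ V ⁻¹' A) - px P X 1 * (P.map V).real A =
      ∫ v in A, (g v - px P X 1) ∂P.map V := by
    rw [integral_sub hg_int.integrableOn (integrable_const _), setIntegral_const, smul_eq_mul,
      mul_comm, measureReal_def, hgA A hA]
  have hbound : ∀ᵐ v ∂(P.map V).restrict A, ‖g v - px P X 1‖ ≤ c := ae_restrict_of_ae hgc
  rw [hdiff]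
  exact norm_setIntegral_le_of_norm_le_const_ae (measure_lt_top _ _) hbound

end ConditionalLaw

section BinaryTreatment

variable {Ω : Type*} [MeasurableSpace Ω] {P : Measure Ω} [IsProbabilityMeasure P] {X : Ω → ℕ}
  {V : Ω → ℝ} {x : ℕ} {A : Set ℝ} {c : ℝ}

lemma px_one_add_px_zero (hX : Measurable X) (hX01 : ∀ ω, X ω ≤ 1) :
    px P X 1 + px P X 0 = 1 := by
  have hsum := measureReal_inter_one_add_inter_zero (P := P) hX hX01 univ
  rwa [inter_univ, inter_univ, probReal_univ] at hsum

lemma px_pos (hX : Measurable X) (hX01 : ∀ ω, X ω ≤ 1) (hp1 : px P X 1 ∈ Ioo 0 1) (hx : x ≤ 1) :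
    0 < px P X x := by
  have hsum := px_one_add_px_zero (P := P) hX hX01
  interval_cases x
  · linarith [hp1.2]
  · exact hp1.1

lemma cdf_map_eq_add_condCDF' (hX : Measurable X) (hX01 : ∀ ω, X ω ≤ 1) (hV : Measurable V)
    (hp1 : px P X 1 ∈ Ioo 0 1) (y : ℝ) :
    cdf (P.map V) y = px P X 1 * condCDF' P X V 1 y + px P X 0 * condCDF' P X V 0 y := by
  have hne : ∀ x ≤ 1, px P X x ≠ 0 := fun x hx ↦ (px_pos hX hX01 hp1 hx).ne'
  have := Measure.isProbabilityMeasure_map (μ := P) hV.aemeasurable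
  have := isProbabilityMeasure_condLaw hV (hne 1 le_rfl)
  have := isProbabilityMeasure_condLaw hV (hne 0 zero_le_one)
  rw [condCDF'_eq_cdf_condLaw hX hV (hne 1 le_rfl),
    condCDF'_eq_cdf_condLaw hX hV (hne 0 zero_le_one), cdf_eq_real, cdf_eq_real, cdf_eq_real,
    map_real_eq_add_condLaw_real hX hX01 hV measurableSet_Iic]

lemma CDep.nonneg (h : CDep P X V c) (hV : Measurable V) : 0 ≤ c := by
  obtain ⟨g, -, -, -, hgc⟩ := h
  have := Measure.isProbabilityMeasure_map (μ := P) hV.aemeasurable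
  obtain ⟨v, hv⟩ := hgc.exists
  exact (abs_nonneg _).trans hv

lemma CDep.abs_condLaw_real_sub_le (h : CDep P X V c) (hX : Measurable X)
    (hX01 : ∀ ω, X ω ≤ 1) (hV : Measurable V) (hp1 : px P X 1 ∈ Ioo 0 1) (hx : x ≤ 1)
    (hA : MeasurableSet A) :
    |(condLaw P X V x).real A - (P.map V).real A| ≤ c / px P X x * (P.map V).real A := by
  have hpx : 0 < px P X x := px_pos hX hX01 hp1 hx
  suffices hjoint : |px P X x * (condLaw P X V x).real A - px P X x * (P.map V).real A| ≤
      c * (P.map V).real A by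
    rwa [← mul_sub, abs_mul, abs_of_pos hpx, ← le_div_iff₀' hpx, mul_div_right_comm] at hjoint
  have htreated := h.abs_measureReal_inter_sub_le hA
  rw [← px_mul_condLaw_real hX hV hA] at htreated
  interval_cases x
  · have hsum := px_one_add_px_zero (P := P) hX hX01
    have htotal := map_real_eq_add_condLaw_real (P := P) hX hX01 hV hA
    rw [abs_sub_comm] at htreated
    convert htreated using 2
    linear_combination -htotal - (P.map V).real A * hsum
  · exact htreated

lemma CDep.cdf_condLaw_mem_Icc (h : CDep P X V c) (hX : Measurable X) (hX01 : ∀ ω, X ω ≤ 1)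
    (hV : Measurable V) (hp1 : px P X 1 ∈ Ioo 0 1) (hx : x ≤ 1) (y : ℝ) :
    cdf (condLaw P X V x) y ∈
      Icc (qLo (px P X x) c (cdf (P.map V) y)) (qUp (px P X x) c (cdf (P.map V) y)) := by
  have hpx : 0 < px P X x := px_pos hX hX01 hp1 hx
  have := Measure.isProbabilityMeasure_map (μ := P) hV.aemeasurable
  have := isProbabilityMeasure_condLaw hV hpx.ne'
  have hIic : MeasurableSet (Iic y) := measurableSet_Iic
  have hbelow := h.abs_condLaw_real_sub_le hX hX01 hV hp1 hx hIic
  have habove := h.abs_condLaw_real_sub_le hX hX01 hV hp1 hx hIic.compl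
  have hjoint_below := px_mul_condLaw_real_le (P := P) (x := x) hX hV hIic
  have hjoint_above := px_mul_condLaw_real_le (P := P) (x := x) hX hV hIic.compl
  rw [← cdf_eq_real, ← cdf_eq_real] at hbelow hjoint_below
  rw [probReal_compl_eq_one_sub hIic, probReal_compl_eq_one_sub hIic, ← cdf_eq_real,
    ← cdf_eq_real] at habove hjoint_above
  rw [sub_sub_sub_cancel_left, abs_sub_comm] at habove
  refine mem_Icc_qLo_qUp hpx ⟨cdf_nonneg _ y, cdf_le_one _ y⟩ ?_ hjoint_below hjoint_above
  rw [mul_min_of_nonneg _ _ (div_nonneg (h.nonneg hV) hpx.le)]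
  exact le_min hbelow habove

lemma CDep.quant_mem_Icc_Qgen (h : CDep P X V c) (hX : Measurable X) (hX01 : ∀ ω, X ω ≤ 1)
    (hV : Measurable V) (hp1 : px P X 1 ∈ Ioo 0 1) {lo hi : EReal}
    (hsupp : ∀ x ≤ 1, ∀ y : ℝ,
      (y < lo → condCDF' P X V x y = 0) ∧ (hi < y → condCDF' P X V x y = 1))
    (hx : x ≤ 1) {τ : ℝ} (hτ : τ ∈ Ioo 0 1) :
    (quant P V τ : EReal) ∈ Icc (Qgen (condCDF' P X V x) lo hi (qLo (px P X x) c τ))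
      (Qgen (condCDF' P X V x) lo hi (qUp (px P X x) c τ)) := by
  have hpx : 0 < px P X x := px_pos hX hX01 hp1 hx
  have htotal := cdf_map_eq_add_condCDF' hX hX01 hV hp1
  have hlo (y : ℝ) (hy : y < lo) : cdf (P.map V) y = 0 := by
    rw [htotal, (hsupp 1 le_rfl y).1 hy, (hsupp 0 zero_le_one y).1 hy, mul_zero, mul_zero, add_zero]
  have hhi (y : ℝ) (hy : hi < y) : cdf (P.map V) y = 1 := by
    rw [htotal, (hsupp 1 le_rfl y).2 hy, (hsupp 0 zero_le_one y).2 hy, mul_one, mul_one,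
      px_one_add_px_zero hX hX01]
  rw [quant_eq_lowerQuantile hV, condCDF'_eq_cdf_condLaw hX hV hpx.ne']
  exact coe_lowerQuantile_mem_Icc_Qgen hpx (h.nonneg hV) hτ (coe_lowerQuantile_mem_Icc hlo hhi hτ)
    (h.cdf_condLaw_mem_Icc hX hX01 hV hp1 hx)

end BinaryTreatment

theorem qte_bounds_general {Ω : Type*} [MeasurableSpace Ω]
    (P : Measure Ω) [IsProbabilityMeasure P]
    (Yv : ℕ → Ω → ℝ) (X : Ω → ℕ) (Y : Ω → ℝ)
    (hYm : ∀ x, Measurable (Yv x)) (hXm : Measurable X)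
    (hX01 : ∀ ω, X ω ≤ 1)
    (hY : ∀ ω, Y ω = Yv (X ω) ω)
    (hp1 : px P X 1 ∈ Ioo 0 1)
    (lo hi : ℕ → EReal)
    (hsupp : ∀ x ≤ 1, ∀ x' ≤ 1, ∀ y : ℝ,
      ((y : EReal) < lo x → condCDF' P X (Yv x) x' y = 0) ∧
      (hi x < (y : EReal) → condCDF' P X (Yv x) x' y = 1))
    (c : ℝ) (hdep1 : CDep P X (Yv 1) c) (hdep0 : CDep P X (Yv 0) c) :
    ∀ τ : ℝ, 0 < τ → τ < 1 →
      Qgen (condCDF' P X Y 1) (lo 1) (hi 1) (qLo (px P X 1) c τ) -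
          Qgen (condCDF' P X Y 0) (lo 0) (hi 0) (qUp (px P X 0) c τ) ≤
        ((quant P (Yv 1) τ - quant P (Yv 0) τ : ℝ) : EReal) ∧
      ((quant P (Yv 1) τ - quant P (Yv 0) τ : ℝ) : EReal) ≤
        Qgen (condCDF' P X Y 1) (lo 1) (hi 1) (qUp (px P X 1) c τ) -
          Qgen (condCDF' P X Y 0) (lo 0) (hi 0) (qLo (px P X 0) c τ) := by
  intro τ hτ0 hτ1
  have hYx (x : ℕ) : condCDF' P X Y x = condCDF' P X (Yv x) x :=
    condCDF'_congr fun ω hω ↦ by rw [hY, hω]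
  have htreated := hdep1.quant_mem_Icc_Qgen hXm hX01 (hYm 1) hp1 (hsupp 1 le_rfl) le_rfl ⟨hτ0, hτ1⟩
  have hcontrol :=
    hdep0.quant_mem_Icc_Qgen hXm hX01 (hYm 0) hp1 (hsupp 0 zero_le_one) zero_le_one ⟨hτ0, hτ1⟩
  rw [hYx, hYx, EReal.coe_sub]
  exact ⟨EReal.sub_le_sub htreated.1 hcontrol.2, EReal.sub_le_sub htreated.2 hcontrol.1⟩

/-- Bounds on the quantile treatment effect under `c`-dependence: for `τ ∈ (0,1)`,
`Q_{Y_1}(τ) - Q_{Y_0}(τ) ∈ [Q̲ᶜ₁(τ) - Q̄ᶜ₀(τ), Q̄ᶜ₁(τ) - Q̲ᶜ₀(τ)]`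
(with possibly infinite endpoints). -/
theorem qte_bounds {Ω : Type*} [MeasurableSpace Ω]
    (P : Measure Ω) [IsProbabilityMeasure P]
    (Yv : ℕ → Ω → ℝ) (X : Ω → ℕ) (Y : Ω → ℝ)
    (hYm : ∀ x, Measurable (Yv x)) (hXm : Measurable X)
    (hX01 : ∀ ω, X ω ≤ 1)
    (hY : ∀ ω, Y ω = Yv (X ω) ω)
    (hp1 : px P X 1 ∈ Set.Ioo (0:ℝ) 1)
    (lo hi : ℕ → EReal) (hlh : ∀ x ≤ 1, lo x < hi x)
    (hcont : ∀ x ≤ 1, ∀ x' ≤ 1, Continuous (condCDF' P X (Yv x) x'))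
    (hmono : ∀ x ≤ 1, ∀ x' ≤ 1, StrictMonoOn (condCDF' P X (Yv x) x')
      {y : ℝ | lo x ≤ (y : EReal) ∧ (y : EReal) ≤ hi x})
    (hsupp : ∀ x ≤ 1, ∀ x' ≤ 1, ∀ y : ℝ,
      ((y : EReal) ≤ lo x → condCDF' P X (Yv x) x' y = 0) ∧
      (hi x ≤ (y : EReal) → condCDF' P X (Yv x) x' y = 1))
    (c : ℝ) (hc : c ∈ Set.Icc (0:ℝ) 1)
    (hdep1 : CDep P X (Yv 1) c) (hdep0 : CDep P X (Yv 0) c) :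
    ∀ τ : ℝ, 0 < τ → τ < 1 →
      Qgen (condCDF' P X Y 1) (lo 1) (hi 1) (qLo (px P X 1) c τ) -
          Qgen (condCDF' P X Y 0) (lo 0) (hi 0) (qUp (px P X 0) c τ) ≤
        ((quant P (Yv 1) τ - quant P (Yv 0) τ : ℝ) : EReal) ∧
      ((quant P (Yv 1) τ - quant P (Yv 0) τ : ℝ) : EReal) ≤
        Qgen (condCDF' P X Y 1) (lo 1) (hi 1) (qUp (px P X 1) c τ) -
          Qgen (condCDF' P X Y 0) (lo 0) (hi 0) (qLo (px P X 0) c τ) :=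
  qte_bounds_general P Yv X Y hYm hXm hX01 hY hp1 lo hi
    (fun x hx x' hx' y ↦ (hsupp x hx x' hx' y).imp (· ∘ le_of_lt) (· ∘ le_of_lt)) c hdep1 hdep0
end
end
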